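/- Let J be a 12-dimensional symplectic F_2-vector space. Define an action of Sp(J) on 4-element subsets of the set of Arf-invariant-0 quadratic refinements of the symplectic form. For a 4-element set {q_4, q_4+a_1, q_4+a_2, q_4+a_3} of even quadratic forms, assign the invariant: (i) class A_1 if a_1+a_2+a_3 = 0; otherwise (a_1,a_2,a_3 independent) (ii) class A_2 if a_i·a_j = 0 for all i≠j; (iii) class A_3 if the number of pairs {i,j} ⊂ {1,2,3} with a_i·a_j = 1 is 1 or 2; (iv) class A_4 if a_i·a_j = 1 for all i≠j. Then these four classes A_1, A_2, A_3, A_4 are exactly the orbits of the Sp(J)-action: two 4-element sets of even quadratic forms lie in the same orbit if and only if they lie in the same class. -/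

import Mathlib

/-- `B` is a symplectic form on the `𝔽₂`-vector space `J`: bilinear, alternating and
non-degenerate. -/
def IsSymplectic {J : Type*} [AddCommGroup J] [Module (ZMod 2) J]
    (B : J → J → ZMod 2) : Prop :=
  (∀ x y z, B (x + y) z = B x z + B y z) ∧
  (∀ x y z, B x (y + z) = B x y + B x z) ∧
  (∀ x, B x x = 0) ∧
  (∀ x, (∀ y, B x y = 0) → x = 0)

/-- The set of quadratic refinements of the form `B`. -/
def QuadSet {J : Type*} [AddCommGroup J] (B : J → J → ZMod 2) : Set (J → ZMod 2) :=
  {q | ∀ x y, q x + q y + q (x + y) = B x y}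

/-- The Arf invariant of `q : J → ℤ/2`: it is `0` iff `q` takes the value `0` on more than
half of the elements of `J`. -/
noncomputable def ArfInv {J : Type*} [Finite J] (q : J → ZMod 2) : ZMod 2 :=
  if Nat.card J < 2 * Nat.card {x : J // q x = 0} then 0 else 1

open scoped Classical in
/-- The class (`A₁`, `A₂`, `A₃` or `A₄`) of a quadruple of even quadratic forms
`{q₄, q₄+a₁, q₄+a₂, q₄+a₃}`, read off from `a₁, a₂, a₃`: class `A₁` if `a₁+a₂+a₃ = 0`;
otherwise `A₂` if all pairings vanish, `A₄` if all pairings are `1`, and `A₃` if the number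
of pairs `{i,j}` with `aᵢ·aⱼ = 1` is `1` or `2`. -/
noncomputable def classIdx {J : Type*} [AddCommGroup J]
    (B : J → J → ZMod 2) (a₁ a₂ a₃ : J) : ℕ :=
  if a₁ + a₂ + a₃ = 0 then 1
  else if B a₁ a₂ = 0 ∧ B a₁ a₃ = 0 ∧ B a₂ a₃ = 0 then 2
  else if B a₁ a₂ = 1 ∧ B a₁ a₃ = 1 ∧ B a₂ a₃ = 1 then 4
  else 3


section Aux

set_option linter.unusedSectionVars false

theorem z2_cases (x : ZMod 2) : x = 0 ∨ x = 1 := by revert x; decide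

variable {J : Type*} [AddCommGroup J] [Module (ZMod 2) J]

theorem two_add (x : J) : x + x = 0 := by
  have h : ((1 : ZMod 2) + 1) • x = 0 := by
    rw [show (1 : ZMod 2) + 1 = 0 by decide, zero_smul]
  simpa [add_smul] using h

theorem add_eq_iff (x y z : J) : x + y = z ↔ x = z + y := by
  constructor
  · rintro rfl; rw [add_assoc, two_add, add_zero]
  · rintro rfl; rw [add_assoc, two_add, add_zero]

theorem symp_symm {B : J → J → ZMod 2} (hB : IsSymplectic B) (x y : J) : B x y = B y x := by
  obtain ⟨h1, h2, h3, h4⟩ := hB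
  have := h3 (x + y)
  rw [h1, h2, h2, h3, h3] at this
  generalize B x y = s at *
  generalize B y x = t at *
  revert s t; decide

theorem symp_zero_left {B : J → J → ZMod 2} (hB : IsSymplectic B) (x : J) : B 0 x = 0 := by
  have := hB.1 0 0 x
  simpa using this

theorem symp_zero_right {B : J → J → ZMod 2} (hB : IsSymplectic B) (x : J) : B x 0 = 0 := by
  rw [symp_symm hB, symp_zero_left hB]

/-- bundled form -/
def bil (B : J → J → ZMod 2) (hB : IsSymplectic B) : LinearMap.BilinForm (ZMod 2) J :=
  LinearMap.mk₂ (ZMod 2) B hB.1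
    (by
      intro c x y
      rcases z2_cases c with rfl | rfl
      · simp [symp_zero_left hB]
      · simp)
    hB.2.1
    (by
      intro c x y
      rcases z2_cases c with rfl | rfl
      · simp [symp_zero_right hB]
      · simp)

@[simp] theorem bil_apply (B : J → J → ZMod 2) (hB : IsSymplectic B) (x y : J) :
    bil B hB x y = B x y := rfl

theorem bil_refl (B : J → J → ZMod 2) (hB : IsSymplectic B) : (bil B hB).IsRefl := by
  intro x y h
  rw [bil_apply] at *
  rw [symp_symm hB, h]

theorem bil_nondeg (B : J → J → ZMod 2) (hB : IsSymplectic B) : (bil B hB).Nondegenerate := by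
  constructor
  · intro x h; exact hB.2.2.2 x h
  · intro x h; exact hB.2.2.2 x (fun y => by rw [symp_symm hB]; exact h y)

theorem symp_inj {B : J → J → ZMod 2} (hB : IsSymplectic B) {a b : J}
    (h : ∀ x, B a x = B b x) : a = b := by
  have : a + b = 0 := hB.2.2.2 _ (fun y => by rw [hB.1, h, CharTwo.add_self_eq_zero])
  rw [add_eq_iff] at this
  simpa using this

theorem exists_rep {B : J → J → ZMod 2} [Finite J] (hB : IsSymplectic B)
    (f : J →ₗ[ZMod 2] ZMod 2) : ∃ c, ∀ x, B c x = f x := by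
  refine ⟨((bil B hB).toDual (bil_nondeg B hB)).symm f, fun x => ?_⟩
  rw [← bil_apply B hB, LinearMap.BilinForm.apply_toDual_symm_apply]

theorem quad_add {B : J → J → ZMod 2} {q : J → ZMod 2} (hq : q ∈ QuadSet B) (x y : J) :
    q (x + y) = q x + q y + B x y := by
  have := hq x y
  generalize B x y = s at *
  generalize q x = t at *
  generalize q y = u at *
  generalize q (x + y) = v at *
  revert s t u v; decide

theorem quad_zero {B : J → J → ZMod 2} (hB : IsSymplectic B) {q : J → ZMod 2}
    (hq : q ∈ QuadSet B) : q 0 = 0 := by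
  have := quad_add hq 0 0
  simpa [symp_zero_left hB] using this

/-- transvection -/
def transv (B : J → J → ZMod 2) (hB : IsSymplectic B) (v : J) : J ≃ₗ[ZMod 2] J :=
  LinearEquiv.ofInvolutive
    (LinearMap.id + (bil B hB v).smulRight v)
    (by
      intro x
      simp only [LinearMap.add_apply, LinearMap.id_apply, LinearMap.smulRight_apply, bil_apply]
      rw [hB.2.1]
      rcases z2_cases (B v x) with h | h
      · simp [h, symp_zero_right hB]
      · simp [h, hB.2.2.1, add_assoc, two_add])

theorem transv_apply (B : J → J → ZMod 2) (hB : IsSymplectic B) (v x : J) :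
    transv B hB v x = x + B v x • v := rfl

theorem transv_of_zero {B : J → J → ZMod 2} (hB : IsSymplectic B) {v x : J} (h : B v x = 0) :
    transv B hB v x = x := by simp [transv_apply, h]

theorem transv_of_one {B : J → J → ZMod 2} (hB : IsSymplectic B) {v x : J} (h : B v x = 1) :
    transv B hB v x = x + v := by simp [transv_apply, h]

theorem transv_symp {B : J → J → ZMod 2} (hB : IsSymplectic B) (v x y : J) :
    B (transv B hB v x) (transv B hB v y) = B x y := by
  rcases z2_cases (B v x) with h | h <;> rcases z2_cases (B v y) with h' | h' <;>
  simp only [transv_apply, h, h', zero_smul, one_smul, add_zero, hB.1, hB.2.1, hB.2.2.1,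
    symp_symm hB x v] <;>
  generalize B x y = s <;> revert s <;> decide

theorem transv_quad {B : J → J → ZMod 2} (hB : IsSymplectic B) {q : J → ZMod 2}
    (hq : q ∈ QuadSet B) (v x : J) :
    q (transv B hB v x) = q x + B v x * (q v + 1) := by
  rcases z2_cases (B v x) with h | h
  · simp [transv_of_zero hB h, h]
  · rw [transv_of_one hB h, quad_add hq, symp_symm hB x v, h]; ring

theorem exists_transl {B : J → J → ZMod 2} [Finite J] (hB : IsSymplectic B) {q q' : J → ZMod 2}
    (hq : q ∈ QuadSet B) (hq' : q' ∈ QuadSet B) : ∃ c, ∀ x, q' x = q x + B c x := by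
  let f : J →+ ZMod 2 :=
    { toFun := fun x => q x + q' x
      map_zero' := by simp [quad_zero hB hq, quad_zero hB hq']
      map_add' := by
        intro x y
        rw [quad_add hq, quad_add hq']
        generalize B x y = s
        generalize q x = t
        generalize q y = u
        generalize q' x = v
        generalize q' y = w
        revert s t u v w; decide }
  obtain ⟨c, hc⟩ := exists_rep hB (f.toZModLinearMap 2)
  refine ⟨c, fun x => ?_⟩
  rw [hc]
  change q' x = q x + (q x + q' x)
  rw [← add_assoc, CharTwo.add_self_eq_zero, zero_add]

theorem arf_zero {B : J → J → ZMod 2} [Finite J] {q : J → ZMod 2}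
    (hq : q ∈ QuadSet B) (a : J) (h : ArfInv q = 0) (h' : ArfInv (fun x => q x + B a x) = 0) :
    q a = 0 := by
  rcases z2_cases (q a) with ha | ha
  · exact ha
  exfalso
  have h1 : Nat.card J < 2 * Nat.card {x : J // q x = 0} := by
    by_contra hc; simp [ArfInv, hc] at h
  have h2 : Nat.card J < 2 * Nat.card {x : J // q x + B a x = 0} := by
    by_contra hc; simp [ArfInv, hc] at h'
  have h3 : Nat.card {x : J // q x + B a x = 0} = Nat.card {x : J // ¬ q x = 0} := by
    refine Nat.card_congr ((Equiv.addLeft a).subtypeEquiv ?_)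
    intro x
    rw [Equiv.coe_addLeft, quad_add hq, ha]
    generalize B a x = s
    generalize q x = t
    revert s t; decide
  have h4 : Nat.card J = Nat.card {x : J // q x = 0} + Nat.card {x : J // ¬ q x = 0} := by
    classical
    rw [← Nat.card_sum]
    exact Nat.card_congr (Equiv.sumCompl (fun x => q x = 0)).symm
  omega

theorem exists_dual_two (S : Submodule (ZMod 2) J) [Finite J] {a b : J} (ha : a ∉ S) (hb : b ∉ S) :
    ∃ f : J →ₗ[ZMod 2] ZMod 2, (∀ x ∈ S, f x = 0) ∧ f a = 1 ∧ f b = 1 := by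
  obtain ⟨f, hf, hfS⟩ := Submodule.exists_le_ker_of_notMem ha
  obtain ⟨g, hg, hgS⟩ := Submodule.exists_le_ker_of_notMem hb
  have hf1 : f a = 1 := (z2_cases _).resolve_left hf
  have hg1 : g b = 1 := (z2_cases _).resolve_left hg
  have hf' : ∀ x ∈ S, f x = 0 := fun x hx => hfS hx
  have hg' : ∀ x ∈ S, g x = 0 := fun x hx => hgS hx
  rcases z2_cases (f b) with h | h
  · rcases z2_cases (g a) with h' | h'
    · exact ⟨f + g, fun x hx => by simp [hf' x hx, hg' x hx], by simp [hf1, h'], by simp [hg1, h]⟩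
    · exact ⟨g, hg', h', hg1⟩
  · exact ⟨f, hf', hf1, h⟩

theorem exists_mid {B : J → J → ZMod 2} [Finite J] (hB : IsSymplectic B)
    (hdim : Module.finrank (ZMod 2) J = 12) {q : J → ZMod 2}
    (hq : q ∈ QuadSet B) (u₁ u₂ a b c₀ : J) :
    ∃ c, q c = 0 ∧ B u₁ c = B u₁ c₀ ∧ B u₂ c = B u₂ c₀ ∧ B a c = B a c₀ ∧ B b c = B b c₀ := by
  classical
  set T : Submodule (ZMod 2) J := Submodule.span (ZMod 2) (({u₁, u₂, a, b} : Finset J) : Set J)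
    with hT
  have hTd : Module.finrank (ZMod 2) T ≤ 4 :=
    (finrank_span_finset_le_card _).trans Finset.card_le_four
  have hm : ∀ x ∈ ({u₁, u₂, a, b} : Finset J), x ∈ T := fun x hx => Submodule.subset_span hx
  by_contra hcon
  push Not at hcon
  have key : ∀ w ∈ (bil B hB).orthogonal T, q (c₀ + w) = 1 := by
    intro w hw
    have hw' : ∀ x ∈ ({u₁, u₂, a, b} : Finset J), B x (c₀ + w) = B x c₀ := by
      intro x hx
      have : B x w = 0 := hw x (hm x hx)
      rw [hB.2.1, this, add_zero]
    refine (z2_cases _).resolve_left fun h0 => ?_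
    exact hcon _ h0 (hw' _ (by simp)) (hw' _ (by simp)) (hw' _ (by simp)) (hw' _ (by simp))
  have hle : (bil B hB).orthogonal T ≤ (bil B hB).orthogonal ((bil B hB).orthogonal T) := by
    intro w hw w' hw'
    change B w' w = 0
    have h1 := key _ hw
    have h2 := key _ hw'
    have h3 := key _ (add_mem hw' hw)
    have h0 := key 0 (zero_mem _)
    rw [add_zero] at h0
    rw [← add_assoc, quad_add hq, quad_add hq, hB.1] at h3
    rw [quad_add hq] at h1 h2
    rw [h0] at h1 h2 h3
    generalize B w' w = s at *
    generalize B c₀ w = t at *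
    generalize B c₀ w' = u at *
    generalize q w = v at *
    generalize q w' = r at *
    clear key h0 hcon
    revert s t u v r; decide
  rw [LinearMap.BilinForm.orthogonal_orthogonal (bil_nondeg B hB) (bil_refl B hB) T] at hle
  have h1 := Submodule.finrank_mono hle
  have h2 := LinearMap.BilinForm.finrank_orthogonal (bil_nondeg B hB) T
  omega

theorem step {B : J → J → ZMod 2} [Finite J] (hB : IsSymplectic B)
    (hdim : Module.finrank (ZMod 2) J = 12) {q : J → ZMod 2}
    (hq : q ∈ QuadSet B) (u₁ u₂ a b : J) (ha : a ∉ Submodule.span (ZMod 2) {u₁, u₂})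
    (hb : b ∉ Submodule.span (ZMod 2) {u₁, u₂}) (hqa : q a = 0) (hqb : q b = 0)
    (h1 : B u₁ a = B u₁ b) (h2 : B u₂ a = B u₂ b) :
    ∃ M : J ≃ₗ[ZMod 2] J, (∀ x y, B (M x) (M y) = B x y) ∧ (∀ x, q (M x) = q x) ∧
      M u₁ = u₁ ∧ M u₂ = u₂ ∧ M a = b := by
  have simple : ∀ a b, q a = 0 → q b = 0 → B u₁ a = B u₁ b → B u₂ a = B u₂ b → B a b = 1 →
      ∃ M : J ≃ₗ[ZMod 2] J, (∀ x y, B (M x) (M y) = B x y) ∧ (∀ x, q (M x) = q x) ∧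
      M u₁ = u₁ ∧ M u₂ = u₂ ∧ M a = b := by
    intro a b hqa hqb h1 h2 hab
    have hv : q (a + b) = 1 := by rw [quad_add hq, hqa, hqb, hab]; rfl
    refine ⟨transv B hB (a + b), transv_symp hB _, fun x => ?_, ?_, ?_, ?_⟩
    · rw [transv_quad hB hq, hv, CharTwo.add_self_eq_zero, mul_zero, add_zero]
    · apply transv_of_zero
      rw [symp_symm hB, hB.2.1, h1, CharTwo.add_self_eq_zero]
    · apply transv_of_zero
      rw [symp_symm hB, hB.2.1, h2, CharTwo.add_self_eq_zero]
    · rw [transv_of_one, ← add_assoc, two_add, zero_add]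
      rw [hB.1, hB.2.2.1, symp_symm hB, hab, zero_add]
  rcases z2_cases (B a b) with hab | hab
  · obtain ⟨f, hfS, hfa, hfb⟩ := exists_dual_two _ ha hb
    obtain ⟨d, hd⟩ := exists_rep hB f
    obtain ⟨c, hc0, hc1, hc2, hca, hcb⟩ := exists_mid hB hdim hq u₁ u₂ a b (a + d)
    have e1 : B u₁ c = B u₁ a := by
      rw [hc1, hB.2.1, symp_symm hB u₁ d, hd, hfS _ (Submodule.subset_span (by simp)), add_zero]
    have e2 : B u₂ c = B u₂ a := by
      rw [hc2, hB.2.1, symp_symm hB u₂ d, hd, hfS _ (Submodule.subset_span (by simp)), add_zero]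
    have ea : B a c = 1 := by
      rw [hca, hB.2.1, hB.2.2.1, symp_symm hB a d, hd, hfa, zero_add]
    have eb : B c b = 1 := by
      rw [symp_symm hB, hcb, hB.2.1, symp_symm hB b a, hab, symp_symm hB b d, hd, hfb, zero_add]
    obtain ⟨M, m1, m2, m3, m4, m5⟩ := simple a c hqa hc0 e1.symm e2.symm ea
    obtain ⟨N, n1, n2, n3, n4, n5⟩ := simple c b hc0 hqb (e1.trans h1) (e2.trans h2) eb
    refine ⟨M.trans N, ?_, ?_, ?_, ?_, ?_⟩ <;> simp [*]
  · exact simple a b hqa hqb h1 h2 hab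


/-- the quadruple of forms, as a set -/
def Fset (B : J → J → ZMod 2) (q : J → ZMod 2) (a b c : J) : Set (J → ZMod 2) :=
  {q, fun x => q x + B a x, fun x => q x + B b x, fun x => q x + B c x}

/-- a quadruple of distinct even forms -/
structure Good [Finite J] (B : J → J → ZMod 2) (q : J → ZMod 2) (a b c : J) : Prop where
  hq : q ∈ QuadSet B
  A0 : ArfInv q = 0
  A1 : ArfInv (fun x => q x + B a x) = 0
  A2 : ArfInv (fun x => q x + B b x) = 0
  A3 : ArfInv (fun x => q x + B c x) = 0
  ha : a ≠ 0
  hb : b ≠ 0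
  hc : c ≠ 0
  hab : a ≠ b
  hac : a ≠ c
  hbc : b ≠ c

theorem Good.swap12 [Finite J] {B : J → J → ZMod 2} {q : J → ZMod 2} {a b c : J}
    (h : Good B q a b c) : Good B q b a c :=
  ⟨h.hq, h.A0, h.A2, h.A1, h.A3, h.hb, h.ha, h.hc, h.hab.symm, h.hbc, h.hac⟩

theorem Good.swap23 [Finite J] {B : J → J → ZMod 2} {q : J → ZMod 2} {a b c : J}
    (h : Good B q a b c) : Good B q a c b :=
  ⟨h.hq, h.A0, h.A1, h.A3, h.A2, h.ha, h.hc, h.hb, h.hac, h.hab, h.hbc.symm⟩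

theorem rebase_fun {B : J → J → ZMod 2} (hB : IsSymplectic B) (q : J → ZMod 2) (a b : J) :
    (fun x => q x + B a x + B (a + b) x) = fun x => q x + B b x := by
  funext x
  rw [hB.1]
  generalize B a x = s
  generalize B b x = t
  generalize q x = u
  revert s t u; decide

theorem rebase_fun' {B : J → J → ZMod 2} (q : J → ZMod 2) (a : J) :
    (fun x => q x + B a x + B a x) = q := by
  funext x
  rw [add_assoc, CharTwo.add_self_eq_zero, add_zero]

theorem Good.rebase [Finite J] {B : J → J → ZMod 2} (hB : IsSymplectic B) {q : J → ZMod 2}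
    {a b c : J} (h : Good B q a b c) : Good B (fun x => q x + B a x) a (a + b) (a + c) where
  hq := by
    intro x y
    have := h.hq x y
    change q x + B a x + (q y + B a y) + (q (x + y) + B a (x + y)) = B x y
    rw [hB.2.1, ← this]
    generalize B a x = s
    generalize B a y = t
    generalize q x = u
    generalize q y = v
    generalize q (x + y) = w
    revert s t u v w; decide
  A0 := h.A1
  A1 := by rw [rebase_fun']; exact h.A0
  A2 := by rw [rebase_fun hB]; exact h.A2
  A3 := by rw [rebase_fun hB]; exact h.A3
  ha := h.ha
  hb := by rw [Ne, add_eq_iff, zero_add]; exact h.hab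
  hc := by rw [Ne, add_eq_iff, zero_add]; exact h.hac
  hab := by simpa using h.hb
  hac := by simpa using h.hc
  hbc := by simpa using h.hbc

theorem Fset_swap12 (B : J → J → ZMod 2) (q : J → ZMod 2) (a b c : J) :
    Fset B q b a c = Fset B q a b c := by
  ext f; simp only [Fset, Set.mem_insert_iff, Set.mem_singleton_iff]; tauto

theorem Fset_swap23 (B : J → J → ZMod 2) (q : J → ZMod 2) (a b c : J) :
    Fset B q a c b = Fset B q a b c := by
  ext f; simp only [Fset, Set.mem_insert_iff, Set.mem_singleton_iff]; tauto

theorem Fset_rebase {B : J → J → ZMod 2} (hB : IsSymplectic B) (q : J → ZMod 2) (a b c : J) :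
    Fset B (fun x => q x + B a x) a (a + b) (a + c) = Fset B q a b c := by
  unfold Fset
  rw [rebase_fun hB, rebase_fun hB, rebase_fun']
  ext f; simp only [Set.mem_insert_iff, Set.mem_singleton_iff]; tauto

/-- canonical representative for class three -/
def Canon [Finite J] (B : J → J → ZMod 2) (q : J → ZMod 2) (a b c : J) : Prop :=
  ∃ q' a' b' c', Good B q' a' b' c' ∧ Fset B q' a' b' c' = Fset B q a b c ∧
    a' + b' + c' ≠ 0 ∧ B a' b' = 1 ∧ B a' c' = 1 ∧ B b' c' = 0

theorem Canon.swap12 [Finite J] {B : J → J → ZMod 2} {q : J → ZMod 2} {a b c : J}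
    (h : Canon B q b a c) : Canon B q a b c := by
  unfold Canon at *; rwa [Fset_swap12] at h

theorem Canon.swap23 [Finite J] {B : J → J → ZMod 2} {q : J → ZMod 2} {a b c : J}
    (h : Canon B q a c b) : Canon B q a b c := by
  unfold Canon at *; rwa [Fset_swap23] at h

theorem Canon.rebase [Finite J] {B : J → J → ZMod 2} (hB : IsSymplectic B) {q : J → ZMod 2}
    {a b c : J} (h : Canon B (fun x => q x + B a x) a (a + b) (a + c)) : Canon B q a b c := by
  unfold Canon at *; rwa [Fset_rebase hB] at h

theorem rebase_sum (a b c : J) : a + (a + b) + (a + c) = a + b + c := by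
  rw [← add_assoc a a b, two_add, zero_add]; abel

theorem canon_two [Finite J] {B : J → J → ZMod 2} (hB : IsSymplectic B) {q : J → ZMod 2}
    {a b c : J} (h : Good B q a b c) (hs : a + b + c ≠ 0)
    (h1 : ¬ (B a b = 1 ∧ B a c = 1 ∧ B b c = 1)) (h2 : B a b + B a c + B b c = 0)
    (h3 : ¬ (B a b = 0 ∧ B a c = 0 ∧ B b c = 0)) : Canon B q a b c := by
  rcases z2_cases (B a b) with x | x <;> rcases z2_cases (B a c) with y | y <;>
    rcases z2_cases (B b c) with z | z <;> simp [x, y, z] at h1 h2 h3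
  · apply Canon.swap23
    apply Canon.swap12
    refine ⟨q, c, a, b, h.swap23.swap12, rfl, ?_, ?_, ?_, x⟩
    · convert hs using 1; abel
    · rw [symp_symm hB]; exact y
    · rw [symp_symm hB]; exact z
  · apply Canon.swap12
    refine ⟨q, b, a, c, h.swap12, rfl, ?_, ?_, z, y⟩
    · convert hs using 1; abel
    · rw [symp_symm hB]; exact x
  · exact ⟨q, a, b, c, h, rfl, hs, x, y, z⟩

theorem canon_one [Finite J] {B : J → J → ZMod 2} (hB : IsSymplectic B) {q : J → ZMod 2}
    {a b c : J} (h : Good B q a b c) (hs : a + b + c ≠ 0)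
    (h1 : B a b + B a c = 1) (h2 : B b c = 0) : Canon B q a b c := by
  apply Canon.rebase hB
  have e1 : B a (a + b) = B a b := by rw [hB.2.1, hB.2.2.1, zero_add]
  have e2 : B a (a + c) = B a c := by rw [hB.2.1, hB.2.2.1, zero_add]
  have e3 : B (a + b) (a + c) = 1 := by
    rw [hB.1, e2, hB.2.1, symp_symm hB b a, h2, add_zero, add_comm, h1]
  apply canon_two hB (h.rebase hB) (by rwa [rebase_sum]) <;> rw [e1, e2, e3] <;>
    generalize B a b = s at * <;> generalize B a c = t at * <;> clear e1 e2 e3 <;>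
    revert s t <;> decide

theorem canon_three [Finite J] {B : J → J → ZMod 2} (hB : IsSymplectic B) {q : J → ZMod 2}
    {a b c : J} (h : Good B q a b c) (hs : a + b + c ≠ 0)
    (h1 : ¬ (B a b = 1 ∧ B a c = 1 ∧ B b c = 1))
    (h3 : ¬ (B a b = 0 ∧ B a c = 0 ∧ B b c = 0)) : Canon B q a b c := by
  rcases z2_cases (B a b + B a c + B b c) with h2 | h2
  · exact canon_two hB h hs h1 h2 h3
  · rcases z2_cases (B b c) with z | z
    · apply canon_one hB h hs _ z
      rwa [z, add_zero] at h2
    · have h4 : B a b = 0 ∧ B a c = 0 := by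
        rw [z] at h1 h2
        generalize B a b = s at *
        generalize B a c = t at *
        clear h3
        revert s t; decide
      apply Canon.swap12
      apply canon_one hB h.swap12 _ _ h4.2
      · convert hs using 1; abel
      · rw [symp_symm hB, h4.1, z, zero_add]

theorem sum_ne_notMem {a b c : J} (hc : c ≠ 0) (hac : a ≠ c) (hbc : b ≠ c)
    (hs : a + b + c ≠ 0) : c ∉ Submodule.span (ZMod 2) {a, b} := by
  rw [Submodule.mem_span_pair]
  rintro ⟨s, t, h⟩
  rcases z2_cases s with rfl | rfl <;> rcases z2_cases t with rfl | rfl <;> simp at h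
  · exact hc h.symm
  · exact hbc h
  · exact hac h
  · apply hs; rw [h, two_add]

theorem core [Finite J] {B : J → J → ZMod 2} (hB : IsSymplectic B)
    (hdim : Module.finrank (ZMod 2) J = 12) {q q' : J → ZMod 2} {a b c a' b' c' : J}
    (h : Good B q a b c) (h' : Good B q' a' b' c') (h12 : B a b = B a' b') (h13 : B a c = B a' c')
    (h23 : B b c = B b' c') (hs : a + b + c = 0 ↔ a' + b' + c' = 0) :
    ∃ M : J ≃ₗ[ZMod 2] J, (∀ x y, B (M x) (M y) = B x y) ∧ (∀ x, q' (M x) = q x) ∧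
      M a = a' ∧ M b = b' ∧ M c = c' := by
  have qa := arf_zero h.hq a h.A0 h.A1
  have qb := arf_zero h.hq b h.A0 h.A2
  have qc := arf_zero h.hq c h.A0 h.A3
  have qa' := arf_zero h'.hq a' h'.A0 h'.A1
  have qb' := arf_zero h'.hq b' h'.A0 h'.A2
  have qc' := arf_zero h'.hq c' h'.A0 h'.A3
  -- first step: match the forms
  obtain ⟨d, hd⟩ := exists_transl hB h.hq h'.hq
  have hqd : q d = 0 := by
    apply arf_zero h.hq d h.A0
    have : (fun x => q x + B d x) = q' := funext fun x => (hd x).symm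
    rw [this]; exact h'.A0
  obtain ⟨M, mB, mq⟩ : ∃ M : J ≃ₗ[ZMod 2] J, (∀ x y, B (M x) (M y) = B x y) ∧
      (∀ x, q' (M x) = q x) := by
    refine ⟨transv B hB d, transv_symp hB d, fun x => ?_⟩
    rw [transv_quad hB h'.hq, hd x, hd d, hqd, hB.2.2.1]
    rw [zero_add, zero_add, mul_one, add_assoc, CharTwo.add_self_eq_zero, add_zero]
  -- match a
  obtain ⟨N, nB, nq, -, -, na⟩ := step hB hdim h'.hq 0 0 (M a) a'
    (by simpa using h.ha) (by simpa using h'.ha) (by rw [mq, qa]) qa'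
    (by simp [symp_zero_left hB]) (by simp [symp_zero_left hB])
  -- match b
  obtain ⟨P, pB, pq, -, pa, pb⟩ := step hB hdim h'.hq 0 a' (N (M b)) b'
    (by
      apply sum_ne_notMem
      · simpa using h.hb
      · symm; simpa using h.hb
      · rw [← na]; simpa using h.hab
      · rw [← na, Ne, add_eq_iff]; simpa using h.hab)
    (by
      apply sum_ne_notMem
      · exact h'.hb
      · exact h'.hb.symm
      · exact h'.hab
      · rw [Ne, add_eq_iff]; simpa using h'.hab)
    (by rw [nq, mq, qb]) qb'
    (by simp [symp_zero_left hB])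
    (by rw [← h12, ← na, nB, mB])
  by_cases hz : a + b + c = 0
  · have hz' := hs.1 hz
    have ec : c = a + b := by
      rw [add_comm, add_eq_iff, zero_add] at hz; exact hz
    have ec' : c' = a' + b' := by
      rw [add_comm, add_eq_iff, zero_add] at hz'; exact hz'
    refine ⟨(M.trans N).trans P, ?_, ?_, ?_, ?_, ?_⟩
    · simp [pB, nB, mB]
    · simp [pq, nq, mq]
    · simp [na, pa]
    · simp [pb]
    · simp [ec, ec', na, pa, pb]
  -- match c
  have hz' : a' + b' + c' ≠ 0 := fun e => hz (hs.2 e)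
  have Ea : P (N (M a)) = a' := by rw [na, pa]
  obtain ⟨Q, rB, rq, ra, rb, rc⟩ := step hB hdim h'.hq a' b' (P (N (M c))) c'
    (by
      rw [← Ea, ← pb]
      apply sum_ne_notMem
      · simpa using h.hc
      · simpa using h.hac
      · simpa using h.hbc
      · intro e
        apply hz
        have : P (N (M (a + b + c))) = 0 := by simpa only [map_add] using e
        simpa only [LinearEquiv.map_eq_zero_iff] using this)
    (sum_ne_notMem h'.hc h'.hac h'.hbc hz')
    (by rw [pq, nq, mq, qc]) qc'
    (by rw [← h13, ← Ea, pB, nB, mB])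
    (by rw [← h23, ← pb, pB, nB, mB])
  refine ⟨((M.trans N).trans P).trans Q, ?_, ?_, ?_, ?_, ?_⟩
  · simp [rB, pB, nB, mB]
  · simp [rq, pq, nq, mq]
  · simp [Ea, ra]
  · simp [pb, rb]
  · simp [rc]

theorem symp_move {B : J → J → ZMod 2} {M : J ≃ₗ[ZMod 2] J}
    (hM : ∀ x y, B (M x) (M y) = B x y) (a x : J) : B a (M.symm x) = B (M a) x := by
  rw [← hM, LinearEquiv.apply_symm_apply]

theorem core_set [Finite J] {B : J → J → ZMod 2} (hB : IsSymplectic B)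
    (hdim : Module.finrank (ZMod 2) J = 12) {q q' : J → ZMod 2} {a b c a' b' c' : J}
    (h : Good B q a b c) (h' : Good B q' a' b' c') (h12 : B a b = B a' b') (h13 : B a c = B a' c')
    (h23 : B b c = B b' c') (hs : a + b + c = 0 ↔ a' + b' + c' = 0) :
    ∃ M : J ≃ₗ[ZMod 2] J, (∀ x y, B (M x) (M y) = B x y) ∧
      (fun f : J → ZMod 2 => fun x => f (M.symm x)) '' Fset B q a b c = Fset B q' a' b' c' := by
  obtain ⟨M, mB, mq, rfl, rfl, rfl⟩ := core hB hdim h h' h12 h13 h23 hs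
  refine ⟨M, mB, ?_⟩
  have : ∀ x, q (M.symm x) = q' x := fun x => by rw [← mq, LinearEquiv.apply_symm_apply]
  simp only [Fset, Set.image_insert_eq, Set.image_singleton, symp_move mB, this]

theorem classIdx_congr {B : J → J → ZMod 2} {a b c a' b' c' : J} (h1 : a + b + c = a' + b' + c')
    (h2 : (B a b = 0 ∧ B a c = 0 ∧ B b c = 0) ↔ (B a' b' = 0 ∧ B a' c' = 0 ∧ B b' c' = 0))
    (h3 : (B a b = 1 ∧ B a c = 1 ∧ B b c = 1) ↔ (B a' b' = 1 ∧ B a' c' = 1 ∧ B b' c' = 1)) :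
    classIdx B a b c = classIdx B a' b' c' := by
  unfold classIdx
  rw [h1]
  simp only [h2, h3]

theorem Fset_mem {B : J → J → ZMod 2} (hB : IsSymplectic B) {q : J → ZMod 2} {a b c : J}
    {f : J → ZMod 2} (h : f ∈ Fset B q a b c) :
    ∃ e, (e = 0 ∨ e = a ∨ e = b ∨ e = c) ∧ ∀ x, f x = q x + B e x := by
  rcases h with rfl | rfl | rfl | rfl
  · exact ⟨0, by simp, fun x => by rw [symp_zero_left hB, add_zero]⟩
  · exact ⟨a, by simp, fun x => rfl⟩
  · exact ⟨b, by simp, fun x => rfl⟩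
  · exact ⟨c, by simp, fun x => rfl⟩

theorem rel_eq {B : J → J → ZMod 2} (hB : IsSymplectic B) {q q' : J → ZMod 2} {e f b : J}
    (h0 : ∀ x, q' x = q x + B e x) (h1 : ∀ x, q' x + B b x = q x + B f x) : b = e + f := by
  apply symp_inj hB
  intro x
  have := h1 x
  rw [h0 x] at this
  rw [hB.1]
  generalize B b x = s at *
  generalize B e x = t at *
  generalize B f x = u at *
  generalize q x = v at *
  clear h0 h1
  revert s t u v; decide

theorem perm_class {B : J → J → ZMod 2} (hB : IsSymplectic B) {a b c e0 e1 e2 e3 : J}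
    (h0 : e0 = 0 ∨ e0 = a ∨ e0 = b ∨ e0 = c) (h1 : e1 = 0 ∨ e1 = a ∨ e1 = b ∨ e1 = c)
    (h2 : e2 = 0 ∨ e2 = a ∨ e2 = b ∨ e2 = c) (h3 : e3 = 0 ∨ e3 = a ∨ e3 = b ∨ e3 = c)
    (n01 : e0 ≠ e1) (n02 : e0 ≠ e2) (n03 : e0 ≠ e3) (n12 : e1 ≠ e2) (n13 : e1 ≠ e3)
    (n23 : e2 ≠ e3) : classIdx B a b c = classIdx B (e0 + e1) (e0 + e2) (e0 + e3) := by
  have key : a + b + c = e0 + e1 + e2 + e3 →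
      classIdx B a b c = classIdx B (e0 + e1) (e0 + e2) (e0 + e3) := by
    intro hs
    have hs' : a + b + c = (e0 + e1) + (e0 + e2) + (e0 + e3) := by
      rw [hs]
      have : (e0 + e1) + (e0 + e2) + (e0 + e3) = (e0 + e0) + (e0 + e1 + e2 + e3) := by abel
      rw [this, two_add, zero_add]
    clear hs
    rcases h0 with h0 | h0 | h0 | h0 <;> rcases h1 with h1 | h1 | h1 | h1 <;>
    first
    | exact absurd (h0.trans h1.symm) n01
    | (rcases h2 with h2 | h2 | h2 | h2 <;>
       first
       | exact absurd (h0.trans h2.symm) n02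
       | exact absurd (h1.trans h2.symm) n12
       | (rcases h3 with h3 | h3 | h3 | h3 <;>
          first
          | exact absurd (h0.trans h3.symm) n03
          | exact absurd (h1.trans h3.symm) n13
          | exact absurd (h2.trans h3.symm) n23
          | (apply classIdx_congr hs' <;> rw [h0, h1, h2, h3] <;>
             simp only [hB.1, hB.2.1, hB.2.2.1, symp_zero_left hB, symp_zero_right hB, zero_add,
               add_zero, symp_symm hB b a, symp_symm hB c a, symp_symm hB c b] <;>
             generalize B a b = s <;> generalize B a c = t <;> generalize B b c = u <;>
             revert s t u <;> decide)))
  apply key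
  rcases h0 with h0 | h0 | h0 | h0 <;> rcases h1 with h1 | h1 | h1 | h1 <;>
    first
    | exact absurd (h0.trans h1.symm) n01
    | (rcases h2 with h2 | h2 | h2 | h2 <;>
       first
       | exact absurd (h0.trans h2.symm) n02
       | exact absurd (h1.trans h2.symm) n12
       | (rcases h3 with h3 | h3 | h3 | h3 <;>
          first
          | exact absurd (h0.trans h3.symm) n03
          | exact absurd (h1.trans h3.symm) n13
          | exact absurd (h2.trans h3.symm) n23
          | (rw [h0, h1, h2, h3]; abel)))

theorem inv_class [Finite J] {B : J → J → ZMod 2} (hB : IsSymplectic B) {q q' : J → ZMod 2}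
    {a b c a' b' c' : J} (h' : Good B q' a' b' c')
    (hF : Fset B q a b c = Fset B q' a' b' c') :
    classIdx B a b c = classIdx B a' b' c' := by
  obtain ⟨e0, m0, k0⟩ := Fset_mem hB (f := q') (by rw [hF]; simp [Fset])
  obtain ⟨e1, m1, k1⟩ := Fset_mem hB (f := fun x => q' x + B a' x) (by rw [hF]; simp [Fset])
  obtain ⟨e2, m2, k2⟩ := Fset_mem hB (f := fun x => q' x + B b' x) (by rw [hF]; simp [Fset])
  obtain ⟨e3, m3, k3⟩ := Fset_mem hB (f := fun x => q' x + B c' x) (by rw [hF]; simp [Fset])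
  obtain ⟨_, _, _, _, _, ha, hb, hc, hab, hac, hbc⟩ := h'
  obtain rfl := rel_eq hB k0 k1
  obtain rfl := rel_eq hB k0 k2
  obtain rfl := rel_eq hB k0 k3
  rw [Ne, add_eq_iff, zero_add] at ha hb hc
  rw [Ne, add_right_inj] at hab hac hbc
  exact perm_class hB m0 m1 m2 m3 ha hb hc hab hac hbc

theorem classIdx_map {B : J → J → ZMod 2} {M : J ≃ₗ[ZMod 2] J}
    (hM : ∀ x y, B (M x) (M y) = B x y) (a b c : J) :
    classIdx B (M a) (M b) (M c) = classIdx B a b c := by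
  have : M a + M b + M c = 0 ↔ a + b + c = 0 := by
    rw [← map_add, ← map_add]; exact LinearEquiv.map_eq_zero_iff M
  unfold classIdx
  by_cases hs : a + b + c = 0
  · rw [if_pos hs, if_pos (this.2 hs)]
  · rw [if_neg hs, if_neg (fun e => hs (this.1 e))]
    simp only [hM]

theorem good_of [Finite J] {B : J → J → ZMod 2} (hB : IsSymplectic B) {q : J → ZMod 2}
    {a b c : J} (hq : q ∈ QuadSet B) (hd : List.Pairwise (· ≠ ·)
      [q, fun x => q x + B a x, fun x => q x + B b x, fun x => q x + B c x])
    (A0 : ArfInv q = 0) (A1 : ArfInv (fun x => q x + B a x) = 0)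
    (A2 : ArfInv (fun x => q x + B b x) = 0) (A3 : ArfInv (fun x => q x + B c x) = 0) :
    Good B q a b c := by
  simp only [List.pairwise_cons, List.mem_cons, List.not_mem_nil, or_false, forall_eq_or_imp,
    forall_eq] at hd
  obtain ⟨⟨d1, d2, d3⟩, ⟨d4, d5⟩, d6, -⟩ := hd
  refine ⟨hq, A0, A1, A2, A3, ?_, ?_, ?_, ?_, ?_, ?_⟩
  · rintro rfl; exact d1 (by simp [symp_zero_left hB])
  · rintro rfl; exact d2 (by simp [symp_zero_left hB])
  · rintro rfl; exact d3 (by simp [symp_zero_left hB])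
  · rintro rfl; exact d4 rfl
  · rintro rfl; exact d5 rfl
  · rintro rfl; exact d6 rfl

theorem good_class_one [Finite J] {B : J → J → ZMod 2} (hB : IsSymplectic B) {q : J → ZMod 2}
    {a b c : J} (h : Good B q a b c) (hs : a + b + c = 0) :
    B a b = 0 ∧ B a c = 0 ∧ B b c = 0 := by
  have qa := arf_zero h.hq a h.A0 h.A1
  have qb := arf_zero h.hq b h.A0 h.A2
  have qc := arf_zero h.hq c h.A0 h.A3
  have ec : c = a + b := by
    rw [add_comm, add_eq_iff, zero_add] at hs; exact hs
  have h1 : B a b = 0 := by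
    rw [ec, quad_add h.hq, qa, qb] at qc; simpa using qc
  refine ⟨h1, ?_, ?_⟩
  · rw [ec, hB.2.1, hB.2.2.1, h1, add_zero]
  · rw [ec, hB.2.1, hB.2.2.1, symp_symm hB, h1, add_zero]

theorem class_cases [Finite J] {B : J → J → ZMod 2} (hB : IsSymplectic B) {q : J → ZMod 2}
    {a b c : J} (h : Good B q a b c) :
    (classIdx B a b c = 1 ∧ a + b + c = 0 ∧ B a b = 0 ∧ B a c = 0 ∧ B b c = 0) ∨
    (classIdx B a b c = 2 ∧ a + b + c ≠ 0 ∧ B a b = 0 ∧ B a c = 0 ∧ B b c = 0) ∨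
    (classIdx B a b c = 4 ∧ a + b + c ≠ 0 ∧ B a b = 1 ∧ B a c = 1 ∧ B b c = 1) ∨
    (classIdx B a b c = 3 ∧ Canon B q a b c) := by
  by_cases hs : a + b + c = 0
  · left
    exact ⟨by simp [classIdx, hs], hs, good_class_one hB h hs⟩
  by_cases h0 : B a b = 0 ∧ B a c = 0 ∧ B b c = 0
  · right; left
    exact ⟨by simp [classIdx, hs, h0], hs, h0⟩
  by_cases h1 : B a b = 1 ∧ B a c = 1 ∧ B b c = 1
  · right; right; left
    exact ⟨by simp [classIdx, hs, h1], hs, h1⟩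
  · right; right; right
    refine ⟨?_, canon_three hB h hs h1 h0⟩
    unfold classIdx
    rw [if_neg hs, if_neg h0, if_neg h1]

theorem main_set [Finite J] {B : J → J → ZMod 2} (hB : IsSymplectic B)
    (hdim : Module.finrank (ZMod 2) J = 12) {q q' : J → ZMod 2} {a b c a' b' c' : J}
    (h : Good B q a b c) (h' : Good B q' a' b' c') :
    (∃ M : J ≃ₗ[ZMod 2] J, (∀ x y, B (M x) (M y) = B x y) ∧
      (fun f : J → ZMod 2 => fun x => f (M.symm x)) '' Fset B q a b c = Fset B q' a' b' c') ↔
    classIdx B a b c = classIdx B a' b' c' := by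
  constructor
  · rintro ⟨M, mB, hF⟩
    rw [← classIdx_map mB]
    apply inv_class hB h' (q := fun x => q (M.symm x))
    rw [← hF]
    simp only [Fset, Set.image_insert_eq, Set.image_singleton, symp_move mB]
  · intro hc
    rcases class_cases hB h with ⟨k, s, x, y, z⟩ | ⟨k, s, x, y, z⟩ | ⟨k, s, x, y, z⟩ | ⟨k, s⟩ <;>
    rcases class_cases hB h' with
      ⟨k', s', x', y', z'⟩ | ⟨k', s', x', y', z'⟩ | ⟨k', s', x', y', z'⟩ | ⟨k', s'⟩ <;>
    first
    | (exfalso; omega)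
    | exact core_set hB hdim h h' (x.trans x'.symm) (y.trans y'.symm) (z.trans z'.symm)
        (by simp [s, s'])
    | skip
    obtain ⟨q1, a1, b1, c1, g, hF, s, x, y, z⟩ := s
    obtain ⟨q2, a2, b2, c2, g', hF', s', x', y', z'⟩ := s'
    rw [← hF, ← hF']
    exact core_set hB hdim g g' (x.trans x'.symm) (y.trans y'.symm) (z.trans z'.symm)
        (by simp [s, s'])

end Aux

/-- In a 12-dimensional symplectic `𝔽₂`-space, the four classes
`A₁, A₂, A₃, A₄` are exactly the orbits of the symplectic group acting on 4-element sets of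
even quadratic refinements: two such sets `{q, q+a₁, q+a₂, q+a₃}` and
`{q', q'+b₁, q'+b₂, q'+b₃}` lie in the same orbit iff they lie in the same class. -/
theorem stmt_13 {J : Type*} [AddCommGroup J] [Module (ZMod 2) J] [Finite J]
    (B : J → J → ZMod 2) (hB : IsSymplectic B)
    (hdim : Module.finrank (ZMod 2) J = 12)
    (q q' : J → ZMod 2) (hq : q ∈ QuadSet B) (hq' : q' ∈ QuadSet B)
    (a₁ a₂ a₃ b₁ b₂ b₃ : J)
    (hdistinct : List.Pairwise (· ≠ ·)
      [q, fun x => q x + B a₁ x, fun x => q x + B a₂ x, fun x => q x + B a₃ x])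
    (hdistinct' : List.Pairwise (· ≠ ·)
      [q', fun x => q' x + B b₁ x, fun x => q' x + B b₂ x, fun x => q' x + B b₃ x])
    (hArf : ArfInv q = 0) (hArf' : ArfInv q' = 0)
    (hArf₁ : ArfInv (fun x => q x + B a₁ x) = 0)
    (hArf₂ : ArfInv (fun x => q x + B a₂ x) = 0)
    (hArf₃ : ArfInv (fun x => q x + B a₃ x) = 0)
    (hArf₁' : ArfInv (fun x => q' x + B b₁ x) = 0)
    (hArf₂' : ArfInv (fun x => q' x + B b₂ x) = 0)
    (hArf₃' : ArfInv (fun x => q' x + B b₃ x) = 0) :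
    (∃ M : J ≃ₗ[ZMod 2] J, (∀ x y, B (M x) (M y) = B x y) ∧
      ({fun x => q (M.symm x), fun x => q (M.symm x) + B a₁ (M.symm x),
        fun x => q (M.symm x) + B a₂ (M.symm x),
        fun x => q (M.symm x) + B a₃ (M.symm x)} : Set (J → ZMod 2)) =
      ({q', fun x => q' x + B b₁ x, fun x => q' x + B b₂ x,
        fun x => q' x + B b₃ x} : Set (J → ZMod 2))) ↔
    classIdx B a₁ a₂ a₃ = classIdx B b₁ b₂ b₃ := by
  have h := good_of hB hq hdistinct hArf hArf₁ hArf₂ hArf₃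
  have h' := good_of hB hq' hdistinct' hArf' hArf₁' hArf₂' hArf₃'
  rw [← main_set hB hdim h h']
  simp only [Fset, Set.image_insert_eq, Set.image_singleton]
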